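/- For the BB(1̄, 1̄, 3, 3̄) code, with f = 1 + x + x^{-1} y^{-3} and g = 1 + y + y^{-1} x³ in R, the anyon periods are ℓ₀ = m₀ = 762: the least positive integer n with x^{n} − 1 ∈ Ideal.span {f, g} is 762, and the least positive integer n with y^{n} − 1 ∈ Ideal.span {f, g} is 762. -/

import Mathlib

noncomputable section

/-- The Laurent polynomial ring `F₂[x^±, y^±]` as a group algebra. -/
abbrev LaurentR : Type := AddMonoidAlgebra (ZMod 2) (ℤ × ℤ)

/-- The monomial `x^i y^j`. -/
def mono (i j : ℤ) : LaurentR := AddMonoidAlgebra.single (i, j) 1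

open Polynomial

section CharTwo

variable {A : Type*} [CommRing A] [CharP A 2] {x y : A}

theorem minpoly_relation_x (hf : x * y ^ 3 * (1 + x) = 1) (hg : y ^ 2 + y + x ^ 3 = 0) :
    1 + x ^ 4 + x ^ 6 + x ^ 7 + x ^ 9 + x ^ 10 + x ^ 11 = 0 := by
  grind

theorem minpoly_relation_y (hf : x * y ^ 3 * (1 + x) = 1) (hg : y ^ 2 + y + x ^ 3 = 0) :
    1 + y + y ^ 3 + y ^ 4 + y ^ 6 + y ^ 10 + y ^ 11 = 0 := by
  grind

theorem pow_768_of_minpoly_relation_x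
    (h : 1 + x ^ 4 + x ^ 6 + x ^ 7 + x ^ 9 + x ^ 10 + x ^ 11 = 0) : x ^ 768 = x ^ 6 := by
  have h16 : x ^ 16 = 1 + x ^ 2 + x ^ 5 + x ^ 7 + x ^ 9 := by
    grind
  have h32 : x ^ 32 = 1 + x ^ 3 + x ^ 6 + x ^ 8 + x ^ 9 := by
    rw [show x ^ 32 = (x ^ 16) ^ 2 by ring, h16]
    clear * - h
    grind
  have h64 : x ^ 64 = x + x ^ 4 + x ^ 6 + x ^ 7 + x ^ 8 + x ^ 10 := by
    rw [show x ^ 64 = (x ^ 32) ^ 2 by ring, h32]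
    clear * - h
    grind
  have h128 : x ^ 128 = x ^ 3 + x ^ 5 + x ^ 7 + x ^ 8 := by
    rw [show x ^ 128 = (x ^ 64) ^ 2 by ring, h64]
    clear * - h
    grind
  have h256 : x ^ 256 = x ^ 3 + x ^ 4 + x ^ 5 + x ^ 6 + x ^ 7 + x ^ 8 + x ^ 10 := by
    rw [show x ^ 256 = (x ^ 128) ^ 2 by ring, h128]
    clear * - h
    grind
  have h512 : x ^ 512 = x ^ 2 + x ^ 3 + x ^ 5 + x ^ 6 + x ^ 7 + x ^ 8 + x ^ 10 := by
    rw [show x ^ 512 = (x ^ 256) ^ 2 by ring, h256]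
    clear * - h
    grind
  rw [show x ^ 768 = x ^ 512 * x ^ 256 by ring, h512, h256]
  clear * - h
  grind

theorem pow_768_of_minpoly_relation_y
    (h : 1 + y + y ^ 3 + y ^ 4 + y ^ 6 + y ^ 10 + y ^ 11 = 0) : y ^ 768 = y ^ 6 := by
  have h16 : y ^ 16 = y + y ^ 4 + y ^ 6 + y ^ 7 + y ^ 8 + y ^ 10 := by
    grind
  have h32 : y ^ 32 = 1 + y ^ 2 + y ^ 3 + y ^ 5 + y ^ 7 + y ^ 8 + y ^ 10 := by
    rw [show y ^ 32 = (y ^ 16) ^ 2 by ring, h16]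
    clear * - h
    grind
  have h64 : y ^ 64 = 1 + y ^ 2 + y ^ 4 + y ^ 10 := by
    rw [show y ^ 64 = (y ^ 32) ^ 2 by ring, h32]
    clear * - h
    grind
  have h128 : y ^ 128 = y + y ^ 2 + y ^ 3 + y ^ 4 + y ^ 6 + y ^ 7 + y ^ 8 + y ^ 9 := by
    rw [show y ^ 128 = (y ^ 64) ^ 2 by ring, h64]
    clear * - h
    grind
  have h256 : y ^ 256 = 1 + y + y ^ 2 + y ^ 4 + y ^ 7 + y ^ 10 := by
    rw [show y ^ 256 = (y ^ 128) ^ 2 by ring, h128]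
    clear * - h
    grind
  have h512 : y ^ 512 = 1 + y + y ^ 7 + y ^ 10 := by
    rw [show y ^ 512 = (y ^ 256) ^ 2 by ring, h256]
    clear * - h
    grind
  rw [show y ^ 768 = y ^ 512 * y ^ 256 by ring, h512, h256]
  clear * - h
  grind

theorem pow_762_eq_one_x (hf : x * y ^ 3 * (1 + x) = 1) (hg : y ^ 2 + y + x ^ 3 = 0) :
    x ^ 762 = 1 := by
  have hu : IsUnit x := IsUnit.of_mul_eq_one (y ^ 3 * (1 + x)) (by linear_combination hf)
  refine (hu.pow 6).mul_left_cancel ?_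
  rw [← pow_add, mul_one]
  exact pow_768_of_minpoly_relation_x (minpoly_relation_x hf hg)

theorem pow_762_eq_one_y (hf : x * y ^ 3 * (1 + x) = 1) (hg : y ^ 2 + y + x ^ 3 = 0) :
    y ^ 762 = 1 := by
  have hu : IsUnit y := IsUnit.of_mul_eq_one (x * y ^ 2 * (1 + x)) (by linear_combination hf)
  refine (hu.pow 6).mul_left_cancel ?_
  rw [← pow_add, mul_one]
  exact pow_768_of_minpoly_relation_y (minpoly_relation_y hf hg)

end CharTwo

section OrderOf

theorem orderOf_eq_762 {M K D : Type*} [Monoid M] [Monoid K] [Monoid D] {z : M}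
    (hz : z ^ 762 = 1) (φ : M →* K) (ψ : M →* D) (hφ : φ z ^ 6 ≠ 1)
    (hψ : ψ z ^ 6 = 1) (hψ₂ : ψ z ^ 2 ≠ 1) (hψ₃ : ψ z ^ 3 ≠ 1) : orderOf z = 762 := by
  refine orderOf_eq_of_pow_and_pow_div_prime (by norm_num) hz fun p hp hpd h => ?_
  have hp' : p = 2 ∨ p = 3 ∨ p = 127 := by
    rw [show 762 = 2 * (3 * 127) by norm_num, hp.dvd_mul, hp.dvd_mul,
      Nat.prime_dvd_prime_iff_eq hp (by norm_num), Nat.prime_dvd_prime_iff_eq hp (by norm_num),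
      Nat.prime_dvd_prime_iff_eq hp (by norm_num)] at hpd
    exact hpd
  rcases hp' with rfl | rfl | rfl
  · apply hψ₃
    have h' := congrArg ψ h
    rwa [map_pow, map_one, show 762 / 2 = 6 * 63 + 3 by norm_num, pow_add, pow_mul, hψ, one_pow,
      one_mul] at h'
  · apply hψ₂
    have h' := congrArg ψ h
    rwa [map_pow, map_one, show 762 / 3 = 6 * 42 + 2 by norm_num, pow_add, pow_mul, hψ, one_pow,
      one_mul] at h'
  · apply hφ
    rw [← map_pow, ← map_one φ]
    exact congrArg φ h

theorem isLeast_orderOf {M : Type*} [Monoid M] {z : M} (hz : 0 < orderOf z) :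
    IsLeast {n : ℕ | 0 < n ∧ z ^ n = 1} (orderOf z) :=
  ⟨⟨hz, pow_orderOf_eq_one z⟩, fun _ hn => orderOf_le_of_pow_eq_one hn.1 hn.2⟩

end OrderOf

section AdjoinRoot

theorem AdjoinRoot.root_pow_ne_one {F : Type*} [Field F] {p : F[X]} {k : ℕ} (hk : 0 < k)
    (hkp : k < p.natDegree) : AdjoinRoot.root p ^ k ≠ 1 := by
  intro h
  have hmk : AdjoinRoot.mk p (X ^ k - C 1) = 0 := by simp [h]
  have hdvd := AdjoinRoot.mk_eq_zero.mp hmk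
  have hle := natDegree_le_of_dvd hdvd (X_pow_sub_C_ne_zero hk 1)
  rw [natDegree_X_pow_sub_C] at hle
  omega

theorem AdjoinRoot.charP_two {p : (ZMod 2)[X]} (hp : 0 < p.natDegree) :
    CharP (AdjoinRoot p) 2 := by
  have := AdjoinRoot.nontrivial p (natDegree_pos_iff_degree_pos.mp hp).ne'
  exact charP_of_injective_algebraMap (algebraMap (ZMod 2) (AdjoinRoot p)).injective 2

end AdjoinRoot

section Quotient

/-- The ideal generated by `1 + x + x⁻¹y⁻³` and `1 + y + y⁻¹x³`. -/
def stabilizerIdeal : Ideal LaurentR :=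
  Ideal.span {1 + mono 1 0 + mono (-1) (-3), 1 + mono 0 1 + mono 3 (-1)}

instance : CharP LaurentR 2 :=
  charP_of_injective_algebraMap (algebraMap (ZMod 2) LaurentR).injective 2

theorem mono_mul_mono (i j k l : ℤ) : mono i j * mono k l = mono (i + k) (j + l) := by
  simp [mono, AddMonoidAlgebra.single_mul_single]

theorem mono_zero_zero : mono 0 0 = 1 := rfl

theorem mono_pow (i j : ℤ) (n : ℕ) : mono i j ^ n = mono (n * i) (n * j) := by
  simp [mono, AddMonoidAlgebra.single_pow]

/-- The class of the monomial `x` in the quotient. -/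
def xBar : LaurentR ⧸ stabilizerIdeal := Ideal.Quotient.mk _ (mono 1 0)

/-- The class of the monomial `y` in the quotient. -/
def yBar : LaurentR ⧸ stabilizerIdeal := Ideal.Quotient.mk _ (mono 0 1)

theorem xBar_yBar_relation_f : xBar * yBar ^ 3 * (1 + xBar) = 1 := by
  have h : mono 1 0 * mono 0 1 ^ 3 * (1 + mono 1 0) - 1 ∈ stabilizerIdeal := by
    have hmem : mono 1 3 * (1 + mono 1 0 + mono (-1) (-3)) ∈ stabilizerIdeal :=
      Ideal.mul_mem_left _ _ (Ideal.subset_span (by simp))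
    convert hmem using 1
    simp only [mono_pow, mul_add, mul_one, mono_mul_mono]
    norm_num [mono_zero_zero, CharTwo.sub_eq_add]
  exact Ideal.Quotient.eq.mpr h

theorem xBar_yBar_relation_g : yBar ^ 2 + yBar + xBar ^ 3 = 0 := by
  have h : mono 0 1 ^ 2 + mono 0 1 + mono 1 0 ^ 3 ∈ stabilizerIdeal := by
    have hmem : mono 0 1 * (1 + mono 0 1 + mono 3 (-1)) ∈ stabilizerIdeal :=
      Ideal.mul_mem_left _ _ (Ideal.subset_span (by simp))
    convert hmem using 1
    simp only [mono_pow, mul_add, mul_one, mono_mul_mono]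
    norm_num
    ring
  exact Ideal.Quotient.eq_zero_iff_mem.mpr h

theorem exists_ringHom_quotient {A : Type*} [CommRing A] [CharP A 2] [Algebra (ZMod 2) A]
    {x y : A} (hf : x * y ^ 3 * (1 + x) = 1) (hg : y ^ 2 + y + x ^ 3 = 0) :
    ∃ φ : LaurentR ⧸ stabilizerIdeal →+* A, φ xBar = x ∧ φ yBar = y := by
  obtain ⟨u, rfl⟩ : IsUnit x :=
    IsUnit.of_mul_eq_one (y ^ 3 * (1 + x)) (by linear_combination hf)
  obtain ⟨v, rfl⟩ : IsUnit y :=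
    IsUnit.of_mul_eq_one (u * y ^ 2 * (1 + u)) (by linear_combination hf)
  let e : Multiplicative (ℤ × ℤ) →* A :=
    { toFun := fun m => ((u ^ m.toAdd.1 * v ^ m.toAdd.2 : Aˣ) : A)
      map_one' := by simp
      map_mul' := fun m n => by
        rw [← Units.val_mul, mul_mul_mul_comm, ← zpow_add, ← zpow_add]
        rfl }
  let φ : LaurentR →ₐ[ZMod 2] A := AddMonoidAlgebra.lift (ZMod 2) A (ℤ × ℤ) e
  have hφ (i j : ℤ) : φ (mono i j) = ((u ^ i * v ^ j : Aˣ) : A) := by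
    simp [φ, e, mono, AddMonoidAlgebra.lift_single]
  have hφf : φ (1 + mono 1 0 + mono (-1) (-3)) = 0 := by
    rw [map_add, map_add, map_one, hφ, hφ, ← (u * v ^ 3).mul_right_eq_zero, mul_add,
      ← Units.val_mul, show u * v ^ 3 * (u ^ (-1 : ℤ) * v ^ (-3 : ℤ)) = 1 by
        rw [mul_mul_mul_comm, zpow_neg_one, mul_inv_cancel, one_mul, zpow_neg]
        exact mul_inv_cancel (v ^ 3)]
    simp only [zpow_one, zpow_zero, mul_one, Units.val_mul, Units.val_pow_eq_pow_val,
      Units.val_one, hf, CharTwo.add_self_eq_zero]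
  have hφg : φ (1 + mono 0 1 + mono 3 (-1)) = 0 := by
    rw [map_add, map_add, map_one, hφ, hφ, ← v.mul_right_eq_zero, mul_add,
      ← Units.val_mul, show v * (u ^ (3 : ℤ) * v ^ (-1 : ℤ)) = u ^ 3 by
        rw [mul_comm, mul_assoc, zpow_neg_one, inv_mul_cancel, mul_one]; rfl]
    simp only [zpow_one, zpow_zero, one_mul, Units.val_pow_eq_pow_val]
    linear_combination hg
  have hker : stabilizerIdeal ≤ RingHom.ker φ.toRingHom := by
    rw [stabilizerIdeal, Ideal.span_le]
    rintro a (rfl | rfl)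
    exacts [hφf, hφg]
  refine ⟨Ideal.Quotient.lift _ φ.toRingHom hker, ?_, ?_⟩
  · exact (hφ 1 0).trans (by simp)
  · exact (hφ 0 1).trans (by simp)

theorem natDegree_quartic : (1 + X ^ 2 + X ^ 4 : (ZMod 2)[X]).natDegree = 4 := by
  compute_degree!

theorem natDegree_septic_x : (1 + X ^ 2 + X ^ 4 + X ^ 6 + X ^ 7 : (ZMod 2)[X]).natDegree = 7 := by
  compute_degree!

theorem natDegree_septic_y :
    (1 + X + X ^ 2 + X ^ 4 + X ^ 5 + X ^ 6 + X ^ 7 : (ZMod 2)[X]).natDegree = 7 := by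
  compute_degree!

instance : CharP (AdjoinRoot (1 + X ^ 2 + X ^ 4 : (ZMod 2)[X])) 2 :=
  AdjoinRoot.charP_two (by rw [natDegree_quartic]; norm_num)

theorem root_quartic_relation :
    1 + AdjoinRoot.root (1 + X ^ 2 + X ^ 4 : (ZMod 2)[X]) ^ 2 + AdjoinRoot.root _ ^ 4 = 0 := by
  have h := AdjoinRoot.mk_self (f := (1 + X ^ 2 + X ^ 4 : (ZMod 2)[X]))
  simpa only [map_add, map_one, map_pow, AdjoinRoot.mk_X] using h

theorem root_quartic_pow_six : AdjoinRoot.root (1 + X ^ 2 + X ^ 4 : (ZMod 2)[X]) ^ 6 = 1 := by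
  have h := root_quartic_relation
  linear_combination (AdjoinRoot.root (1 + X ^ 2 + X ^ 4 : (ZMod 2)[X]) ^ 2 - 1) * h

theorem exists_ringHom_quartic_x :
    ∃ φ : LaurentR ⧸ stabilizerIdeal →+* AdjoinRoot (1 + X ^ 2 + X ^ 4 : (ZMod 2)[X]),
      φ xBar = AdjoinRoot.root _ := by
  have h := root_quartic_relation
  set t := AdjoinRoot.root (1 + X ^ 2 + X ^ 4 : (ZMod 2)[X])
  obtain ⟨φ, hφ, -⟩ := exists_ringHom_quotient (x := t) (y := 1 + t ^ 2 + t ^ 3)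
    (by grind) (by grind)
  exact ⟨φ, hφ⟩

theorem exists_ringHom_quartic_y :
    ∃ φ : LaurentR ⧸ stabilizerIdeal →+* AdjoinRoot (1 + X ^ 2 + X ^ 4 : (ZMod 2)[X]),
      φ yBar = AdjoinRoot.root _ := by
  have h := root_quartic_relation
  set t := AdjoinRoot.root (1 + X ^ 2 + X ^ 4 : (ZMod 2)[X])
  obtain ⟨φ, -, hφ⟩ := exists_ringHom_quotient (x := 1 + t ^ 2 + t ^ 3) (y := t)
    (by grind) (by grind)
  exact ⟨φ, hφ⟩

theorem exists_ringHom_septic_x :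
    ∃ φ : LaurentR ⧸ stabilizerIdeal →+*
      AdjoinRoot (1 + X ^ 2 + X ^ 4 + X ^ 6 + X ^ 7 : (ZMod 2)[X]),
      φ xBar = AdjoinRoot.root _ := by
  set p := (1 + X ^ 2 + X ^ 4 + X ^ 6 + X ^ 7 : (ZMod 2)[X]) with hp
  have : CharP (AdjoinRoot p) 2 := AdjoinRoot.charP_two (by rw [hp, natDegree_septic_x]; norm_num)
  set t := AdjoinRoot.root p with ht
  have h : 1 + t ^ 2 + t ^ 4 + t ^ 6 + t ^ 7 = 0 := by
    simpa [hp, ht] using AdjoinRoot.mk_self (f := p)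
  obtain ⟨φ, hφ, -⟩ := exists_ringHom_quotient (x := t) (y := t ^ 4 + t ^ 6)
    (by clear_value t p; grind) (by clear_value t p; grind)
  exact ⟨φ, hφ⟩

theorem exists_ringHom_septic_y :
    ∃ φ : LaurentR ⧸ stabilizerIdeal →+*
      AdjoinRoot (1 + X + X ^ 2 + X ^ 4 + X ^ 5 + X ^ 6 + X ^ 7 : (ZMod 2)[X]),
      φ yBar = AdjoinRoot.root _ := by
  set p := (1 + X + X ^ 2 + X ^ 4 + X ^ 5 + X ^ 6 + X ^ 7 : (ZMod 2)[X]) with hp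
  have : CharP (AdjoinRoot p) 2 := AdjoinRoot.charP_two (by rw [hp, natDegree_septic_y]; norm_num)
  set t := AdjoinRoot.root p with ht
  have h : 1 + t + t ^ 2 + t ^ 4 + t ^ 5 + t ^ 6 + t ^ 7 = 0 := by
    simpa [hp, ht] using AdjoinRoot.mk_self (f := p)
  obtain ⟨φ, -, hφ⟩ := exists_ringHom_quotient (x := t ^ 2 + t ^ 4 + t ^ 6) (y := t)
    (by clear_value t p; grind) (by clear_value t p; grind)
  exact ⟨φ, hφ⟩

instance : CharP (LaurentR ⧸ stabilizerIdeal) 2 := by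
  obtain ⟨φ, -⟩ := exists_ringHom_quartic_x
  have := CharP.nontrivial_of_char_ne_one (R := AdjoinRoot (1 + X ^ 2 + X ^ 4 : (ZMod 2)[X]))
    (v := 2) (by norm_num)
  have := φ.domain_nontrivial
  exact charP_of_injective_algebraMap
    (algebraMap (ZMod 2) (LaurentR ⧸ stabilizerIdeal)).injective 2

theorem orderOf_xBar : orderOf xBar = 762 := by
  obtain ⟨φ, hφ⟩ := exists_ringHom_septic_x
  obtain ⟨ψ, hψ⟩ := exists_ringHom_quartic_x
  apply orderOf_eq_762 (pow_762_eq_one_x xBar_yBar_relation_f xBar_yBar_relation_g)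
    φ.toMonoidHom ψ.toMonoidHom
  · exact hφ ▸ AdjoinRoot.root_pow_ne_one (by norm_num) (by rw [natDegree_septic_x]; norm_num)
  · exact hψ ▸ root_quartic_pow_six
  · exact hψ ▸ AdjoinRoot.root_pow_ne_one (by norm_num) (by rw [natDegree_quartic]; norm_num)
  · exact hψ ▸ AdjoinRoot.root_pow_ne_one (by norm_num) (by rw [natDegree_quartic]; norm_num)

theorem orderOf_yBar : orderOf yBar = 762 := by
  obtain ⟨φ, hφ⟩ := exists_ringHom_septic_y
  obtain ⟨ψ, hψ⟩ := exists_ringHom_quartic_y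
  apply orderOf_eq_762 (pow_762_eq_one_y xBar_yBar_relation_f xBar_yBar_relation_g)
    φ.toMonoidHom ψ.toMonoidHom
  · exact hφ ▸ AdjoinRoot.root_pow_ne_one (by norm_num) (by rw [natDegree_septic_y]; norm_num)
  · exact hψ ▸ root_quartic_pow_six
  · exact hψ ▸ AdjoinRoot.root_pow_ne_one (by norm_num) (by rw [natDegree_quartic]; norm_num)
  · exact hψ ▸ AdjoinRoot.root_pow_ne_one (by norm_num) (by rw [natDegree_quartic]; norm_num)

theorem mono_sub_one_mem_iff_xBar (n : ℕ) :
    mono n 0 - 1 ∈ stabilizerIdeal ↔ xBar ^ n = 1 := by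
  rw [xBar, ← map_pow, mono_pow, mul_one, mul_zero, ← map_one (Ideal.Quotient.mk _),
    Ideal.Quotient.eq]

theorem mono_sub_one_mem_iff_yBar (n : ℕ) :
    mono 0 n - 1 ∈ stabilizerIdeal ↔ yBar ^ n = 1 := by
  rw [yBar, ← map_pow, mono_pow, mul_one, mul_zero, ← map_one (Ideal.Quotient.mk _),
    Ideal.Quotient.eq]

end Quotient

/-- For the BB(1̄, 1̄, 3, 3̄) code, with `f = 1 + x + x⁻¹y⁻³` and `g = 1 + y + y⁻¹x³`, the
anyon periods are `ℓ₀ = m₀ = 762`: `762` is the least positive integer `n` with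
`x^n − 1 ∈ (f, g)`, and likewise the least positive integer `n` with `y^n − 1 ∈ (f, g)`. -/
theorem bb_1133bar_anyon_periods :
    IsLeast {n : ℕ | 0 < n ∧ mono (n : ℤ) 0 - 1 ∈
      Ideal.span ({1 + mono 1 0 + mono (-1) (-3),
        1 + mono 0 1 + mono 3 (-1)} : Set LaurentR)} 762 ∧
    IsLeast {n : ℕ | 0 < n ∧ mono 0 (n : ℤ) - 1 ∈
      Ideal.span ({1 + mono 1 0 + mono (-1) (-3),
        1 + mono 0 1 + mono 3 (-1)} : Set LaurentR)} 762 := by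
  change IsLeast {n : ℕ | 0 < n ∧ mono (n : ℤ) 0 - 1 ∈ stabilizerIdeal} 762 ∧
    IsLeast {n : ℕ | 0 < n ∧ mono 0 (n : ℤ) - 1 ∈ stabilizerIdeal} 762
  simp only [mono_sub_one_mem_iff_xBar, mono_sub_one_mem_iff_yBar]
  have hx := isLeast_orderOf (z := xBar) (by rw [orderOf_xBar]; norm_num)
  have hy := isLeast_orderOf (z := yBar) (by rw [orderOf_yBar]; norm_num)
  rw [orderOf_xBar] at hx
  rw [orderOf_yBar] at hy
  exact ⟨hx, hy⟩
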